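/- arXiv:1112.0490 — 2 statements merged into one kernel-verified Lean document; each statement's English description precedes it below -/
import Mathlib

section
/- For every y ∈ ℝ³, the integral ∫_{ℝ³} e^{-|z|} e^{-|z-y|} / (|z| · |z-y|) dz equals 2π e^{-|y|}. -/
open MeasureTheory Real

/-- Substitution `s = |z| + |z - y|` on a half plane slice. -/
lemma radial_sub (t R : ℝ) :
    ∫⁻ r in Set.Ioi (0:ℝ), ENNReal.ofReal r * ENNReal.ofReal
      (Real.exp (-√(t^2 + r^2)) * Real.exp (-√((t-R)^2 + r^2)) /
        (√(t^2 + r^2) * √((t-R)^2 + r^2)))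
    = ∫⁻ s in Set.Ioi (|t| + |t - R|), ENNReal.ofReal (Real.exp (-s) / s) := by
  set f : ℝ → ℝ := fun r => √(t^2 + r^2) + √((t-R)^2 + r^2) with hf
  set f' : ℝ → ℝ := fun r => r / √(t^2 + r^2) + r / √((t-R)^2 + r^2) with hf'
  have hd : ∀ c : ℝ, ∀ r ∈ Set.Ioi (0:ℝ),
      HasDerivAt (fun r : ℝ => √(c^2 + r^2)) (r / √(c^2 + r^2)) r := by
    intro c r hr
    have hr' : 0 < r := hr
    have h1 : HasDerivAt (fun r : ℝ => c^2 + r^2) (2 * r) r := by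
      simpa using ((hasDerivAt_pow 2 r).const_add (c^2))
    have h2 := h1.sqrt (by positivity)
    convert h2 using 1
    field_simp
  have hmono : StrictMonoOn f (Set.Ici 0) := by
    intro a ha b hb hab
    have ha' : 0 ≤ a := ha
    have : a^2 < b^2 := by nlinarith
    simp only [hf]
    apply add_lt_add
    · exact Real.sqrt_lt_sqrt (by positivity) (by linarith)
    · exact Real.sqrt_lt_sqrt (by positivity) (by linarith)
  have h0 : f 0 = |t| + |t - R| := by simp [hf, Real.sqrt_sq_eq_abs]
  have himg : f '' Set.Ioi 0 = Set.Ioi (|t| + |t - R|) := by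
    apply Set.Subset.antisymm
    · rintro _ ⟨r, hr, rfl⟩
      rw [← h0]
      exact hmono (Set.mem_Ici.2 le_rfl) (Set.mem_Ici.2 (le_of_lt hr)) hr
    · intro s hs
      have hs' : |t| + |t - R| < s := hs
      have hs0 : 0 < s := by linarith [abs_nonneg t, abs_nonneg (t - R)]
      have hfs : s < f s := by
        have h1 : s ≤ √(t^2 + s^2) := Real.le_sqrt_of_sq_le (by nlinarith [sq_nonneg t])
        have h2 : s ≤ √((t-R)^2 + s^2) :=
          Real.le_sqrt_of_sq_le (by nlinarith [sq_nonneg (t-R)])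
        simp only [hf]; linarith
      have hc : ContinuousOn f (Set.Icc 0 s) := by
        apply Continuous.continuousOn; simp only [hf]; fun_prop
      obtain ⟨r, hr, hrs⟩ := intermediate_value_Ioo hs0.le hc ⟨by rw [h0]; exact hs', hfs⟩
      exact ⟨r, hr.1, hrs⟩
  rw [← himg, lintegral_image_eq_lintegral_abs_deriv_mul measurableSet_Ioi
    (f := f) (f' := f') (fun r hr => ((hd t r hr).add (hd (t-R) r hr)).hasDerivWithinAt)
    (hmono.injOn.mono Set.Ioi_subset_Ici_self)]
  refine setLIntegral_congr_fun measurableSet_Ioi fun r hr => ?_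
  have hr' : 0 < r := hr
  have ha : 0 < √(t^2 + r^2) := by positivity
  have hb : 0 < √((t-R)^2 + r^2) := by positivity
  simp only [hf, hf']
  rw [← ENNReal.ofReal_mul hr'.le, ← ENNReal.ofReal_mul (abs_nonneg _),
    abs_of_pos (by positivity), neg_add, Real.exp_add]
  congr 1
  field_simp
  ring

lemma slice_int (R : ℝ) (hR : 0 ≤ R) :
    ∫⁻ t : ℝ, ∫⁻ s in Set.Ioi (|t| + |t - R|), ENNReal.ofReal (Real.exp (-s) / s)
      = ENNReal.ofReal (Real.exp (-R)) := by
  have hset : MeasurableSet {p : ℝ × ℝ | |p.1| + |p.1 - R| < p.2} :=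
    measurableSet_lt (by fun_prop) (by fun_prop)
  calc _ = ∫⁻ t : ℝ, ∫⁻ s : ℝ, Set.indicator {p : ℝ × ℝ | |p.1| + |p.1 - R| < p.2}
          (fun p => ENNReal.ofReal (Real.exp (-p.2) / p.2)) (t, s) := by
        refine lintegral_congr fun t => ?_
        rw [← lintegral_indicator measurableSet_Ioi]
        rfl
    _ = ∫⁻ s : ℝ, ∫⁻ t : ℝ, Set.indicator {p : ℝ × ℝ | |p.1| + |p.1 - R| < p.2}
          (fun p => ENNReal.ofReal (Real.exp (-p.2) / p.2)) (t, s) := by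
        apply lintegral_lintegral_swap
        exact (Measurable.indicator (by fun_prop) hset).aemeasurable
    _ = ∫⁻ s : ℝ, Set.indicator (Set.Ioi R) (fun s => ENNReal.ofReal (Real.exp (-s))) s := by
        refine lintegral_congr fun s => ?_
        by_cases hs : R < s
        · rw [Set.indicator_of_mem (Set.mem_Ioi.2 hs)]
          have : ∀ t : ℝ, Set.indicator {p : ℝ × ℝ | |p.1| + |p.1 - R| < p.2}
              (fun p => ENNReal.ofReal (Real.exp (-p.2) / p.2)) (t, s)
              = Set.indicator (Set.Ioo ((R-s)/2) ((R+s)/2))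
                (fun _ => ENNReal.ofReal (Real.exp (-s) / s)) t := by
            intro t
            have : ((t, s) ∈ {p : ℝ × ℝ | |p.1| + |p.1 - R| < p.2}) ↔
                t ∈ Set.Ioo ((R-s)/2) ((R+s)/2) := by
              simp only [Set.mem_ofPred_eq, Set.mem_Ioo]
              rcases abs_cases t with h | h <;> rcases abs_cases (t - R) with h' | h' <;>
                constructor <;> intro h'' <;> (try constructor) <;> linarith
            by_cases h : t ∈ Set.Ioo ((R-s)/2) ((R+s)/2)
            · rw [Set.indicator_of_mem h, Set.indicator_of_mem (this.2 h)]
            · rw [Set.indicator_of_notMem h, Set.indicator_of_notMem (fun h' => h (this.1 h'))]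
          simp_rw [this]
          rw [lintegral_indicator measurableSet_Ioo, setLIntegral_const, Real.volume_Ioo,
            ← ENNReal.ofReal_mul (by have : 0 < s := by linarith
                                     positivity)]
          congr 1
          have : s ≠ 0 := by linarith
          field_simp
          ring
        · rw [Set.indicator_of_notMem (by simpa using hs)]
          rw [lintegral_eq_zero_iff']
          · refine Filter.Eventually.of_forall fun t => ?_
            apply Set.indicator_of_notMem
            simp only [Set.mem_ofPred_eq]
            intro h
            rcases abs_cases t with h | h <;> rcases abs_cases (t - R) with h' | h' <;> linarith
          · have : Measurable (Set.indicator {p : ℝ × ℝ | |p.1| + |p.1 - R| < p.2}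
              (fun p => ENNReal.ofReal (Real.exp (-p.2) / p.2))) :=
              Measurable.indicator (by fun_prop) hset
            exact (this.comp (by fun_prop : Measurable fun t : ℝ => (t, s))).aemeasurable
    _ = _ := by
        rw [lintegral_indicator measurableSet_Ioi,
          ← ofReal_integral_eq_lintegral_ofReal (integrableOn_exp_neg_Ioi R)
            (Filter.Eventually.of_forall fun _ => (Real.exp_pos _).le), integral_exp_neg_Ioi]

lemma polar_int (g : ℝ → ENNReal) (hg : Measurable g) :
    ∫⁻ p : ℝ × ℝ, g (p.1^2 + p.2^2)
      = ENNReal.ofReal (2 * π) * ∫⁻ r in Set.Ioi (0:ℝ), ENNReal.ofReal r * g (r^2) := by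
  rw [← lintegral_comp_polarCoord_symm]
  have : ∀ p : ℝ × ℝ, (polarCoord.symm p).1^2 + (polarCoord.symm p).2^2 = p.1^2 := by
    intro p
    simp only [polarCoord_symm_apply]
    nlinarith [Real.sin_sq_add_cos_sq p.2]
  simp_rw [this, polarCoord_target, smul_eq_mul]
  rw [Measure.volume_eq_prod, ← Measure.prod_restrict, lintegral_prod _ (by fun_prop)]
  simp only [lintegral_const, Measure.restrict_apply_univ, Real.volume_Ioo]
  rw [lintegral_mul_const _ (by fun_prop), mul_comm]
  congr 2
  ring

lemma lint_euclid (F : EuclideanSpace ℝ (Fin 3) → ENNReal) (hF : Measurable F) :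
    ∫⁻ z, F z = ∫⁻ t : ℝ, ∫⁻ p : ℝ × ℝ, F (WithLp.toLp 2 ![t, p.1, p.2]) := by
  rw [← (PiLp.volume_preserving_toLp (Fin 3)).lintegral_comp hF,
    ← (volume_preserving_piFinSuccAbove (fun _ : Fin 3 => ℝ) 0).symm.lintegral_comp (by fun_prop),
    Measure.volume_eq_prod, lintegral_prod _ (by fun_prop)]
  refine lintegral_congr fun t => ?_
  rw [← (volume_preserving_finTwoArrow ℝ).symm.lintegral_comp (by fun_prop)]
  refine lintegral_congr fun p => ?_
  congr 2
  ext i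
  fin_cases i <;> rfl

lemma main_axis (R : ℝ) (hR : 0 ≤ R) :
    ∫⁻ z : EuclideanSpace ℝ (Fin 3), ENNReal.ofReal
      (Real.exp (-‖z‖) * Real.exp (-‖z - EuclideanSpace.single 0 R‖) /
        (‖z‖ * ‖z - EuclideanSpace.single 0 R‖))
    = ENNReal.ofReal (2 * π * Real.exp (-R)) := by
  rw [lint_euclid _ (by fun_prop)]
  have h1 : ∀ (t : ℝ) (p : ℝ × ℝ), ‖(WithLp.toLp 2 ![t, p.1, p.2] : EuclideanSpace ℝ (Fin 3))‖
      = √(t^2 + (p.1^2 + p.2^2)) := by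
    intro t p
    simp [EuclideanSpace.norm_eq, Fin.sum_univ_three, add_assoc]
  have h2 : ∀ (t : ℝ) (p : ℝ × ℝ), ‖(WithLp.toLp 2 ![t, p.1, p.2] : EuclideanSpace ℝ (Fin 3))
      - EuclideanSpace.single 0 R‖ = √((t-R)^2 + (p.1^2 + p.2^2)) := by
    intro t p
    simp [EuclideanSpace.norm_eq, Fin.sum_univ_three, add_assoc]
  simp_rw [h1, h2]
  have h3 : ∀ t : ℝ, ∫⁻ p : ℝ × ℝ, ENNReal.ofReal
      (Real.exp (-√(t^2 + (p.1^2 + p.2^2))) * Real.exp (-√((t-R)^2 + (p.1^2 + p.2^2))) /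
        (√(t^2 + (p.1^2 + p.2^2)) * √((t-R)^2 + (p.1^2 + p.2^2))))
      = ENNReal.ofReal (2 * π) *
        ∫⁻ s in Set.Ioi (|t| + |t - R|), ENNReal.ofReal (Real.exp (-s) / s) := by
    intro t
    rw [polar_int (fun q => ENNReal.ofReal
      (Real.exp (-√(t^2 + q)) * Real.exp (-√((t-R)^2 + q)) /
        (√(t^2 + q) * √((t-R)^2 + q)))) (by fun_prop), radial_sub]
  simp_rw [h3]
  rw [lintegral_const_mul' _ _ ENNReal.ofReal_ne_top, slice_int R hR,
    ← ENNReal.ofReal_mul (by positivity)]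

theorem stmt_0 (y : EuclideanSpace ℝ (Fin 3)) :
    ∫ z : EuclideanSpace ℝ (Fin 3),
      Real.exp (-‖z‖) * Real.exp (-‖z - y‖) / (‖z‖ * ‖z - y‖)
    = 2 * π * Real.exp (-‖y‖) := by
  rw [integral_eq_lintegral_of_nonneg_ae (Filter.Eventually.of_forall fun z => by positivity)
    (Measurable.aestronglyMeasurable (by fun_prop))]
  have hn : ‖(EuclideanSpace.single 0 ‖y‖ : EuclideanSpace ℝ (Fin 3))‖ = ‖y‖ := by simp
  obtain ⟨φ, hφ⟩ : ∃ φ : EuclideanSpace ℝ (Fin 3) ≃ₗᵢ[ℝ] EuclideanSpace ℝ (Fin 3),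
      φ (EuclideanSpace.single 0 ‖y‖) = y := ⟨_, Submodule.reflection_sub hn⟩
  rw [← φ.measurePreserving.lintegral_comp (by fun_prop)]
  have h : ∀ z, ‖φ z - y‖ = ‖z - EuclideanSpace.single 0 ‖y‖‖ := by
    intro z
    conv_lhs => rw [← hφ]
    rw [← map_sub, φ.norm_map]
  simp_rw [h, φ.norm_map]
  rw [main_axis _ (norm_nonneg y), ENNReal.toReal_ofReal (by positivity)]
end

section
/- Let δ ∈ (0,1), b > 0, and let a₁, a₂, a₃, a₄ be real numbers with a₄ ≠ 0. For η' ∈ ℝ³ and s > 0 define J(η', s) := ∫_{ℝ³} ∫_{ℝ³} ( e^{-s|η - η'|} / |η - η'| ) ( 1 + |a₁ η + a₂ ζ|^δ ) e^{-b |a₃ η + a₄ ζ|} dζ dη. Then there exists a constant c > 0 such that for all η' ∈ ℝ³: (i) J(η', s) ≤ c (1+|η'|)^δ / s² whenever s ≥ 1, and (ii) J(η', s) ≤ c (1+|η'|)^δ / s^{2+δ} whenever 0 < s ≤ √2. -/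
open MeasureTheory Real

lemma aux_exp_int (b : ℝ) (hb : 0 < b) (n : ℕ) :
    IntegrableOn (fun y : ℝ => y ^ n * Real.exp (-b * y)) (Set.Ioi 0) := by
  have h := integrableOn_rpow_mul_exp_neg_mul_rpow (p := 1) (s := (n : ℝ)) (b := b)
    (by have : (0 : ℝ) ≤ n := Nat.cast_nonneg n
        linarith) one_pos hb
  refine h.congr_fun ?_ measurableSet_Ioi
  intro y hy
  simp

lemma aux_int1 (b : ℝ) (hb : 0 < b) :
    Integrable (fun u : EuclideanSpace ℝ (Fin 3) => (1 + ‖u‖) * Real.exp (-b * ‖u‖)) := by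
  rw [integrable_fun_norm_addHaar (μ := volume) (E := EuclideanSpace ℝ (Fin 3))
    (f := fun y => (1 + y) * Real.exp (-b * y))]
  refine ((aux_exp_int b hb 2).add (aux_exp_int b hb 3)).congr_fun ?_ measurableSet_Ioi
  intro y hy
  simp
  ring

lemma aux_int2 :
    Integrable (fun u : EuclideanSpace ℝ (Fin 3) =>
      Real.exp (-1 * ‖u‖) / ‖u‖ * (1 + ‖u‖)) := by
  rw [integrable_fun_norm_addHaar (μ := volume) (E := EuclideanSpace ℝ (Fin 3))
    (f := fun y => Real.exp (-1 * y) / y * (1 + y))]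
  refine ((aux_exp_int 1 one_pos 1).add (aux_exp_int 1 one_pos 2)).congr_fun ?_
    measurableSet_Ioi
  intro y hy
  have : y ≠ 0 := ne_of_gt hy
  simp
  field_simp

/-- Inner pointwise estimate. -/
lemma aux_pt (δ a₁ a₂ a₃ a₄ : ℝ) (h0 : 0 < δ) (h1 : δ < 1) (ha₄ : a₄ ≠ 0) :
    ∃ M > (0 : ℝ), ∀ η ζ : EuclideanSpace ℝ (Fin 3),
      1 + ‖a₁ • η + a₂ • ζ‖ ^ δ ≤ M * (1 + ‖η‖) ^ δ * (1 + ‖a₃ • η + a₄ • ζ‖) := by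
  set A := |a₁ - a₂ / a₄ * a₃|
  set B := |a₂ / a₄|
  have hA : 0 ≤ A := abs_nonneg _
  have hB : 0 ≤ B := abs_nonneg _
  refine ⟨2 * (1 + A + B) ^ δ, by positivity, fun η ζ => ?_⟩
  set u := a₃ • η + a₄ • ζ with hu
  have e : a₁ • η + a₂ • ζ = (a₁ - a₂ / a₄ * a₃) • η + (a₂ / a₄) • u := by
    rw [hu, smul_add, smul_smul, smul_smul, div_mul_cancel₀ _ ha₄]
    module
  have hn : ‖a₁ • η + a₂ • ζ‖ ≤ A * ‖η‖ + B * ‖u‖ := by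
    rw [e]
    refine (norm_add_le _ _).trans ?_
    rw [norm_smul, norm_smul, Real.norm_eq_abs, Real.norm_eq_abs]
  have hη := norm_nonneg η
  have hu0 := norm_nonneg u
  set x := ‖a₁ • η + a₂ • ζ‖
  have hx : 0 ≤ x := norm_nonneg _
  have s1 : (1 : ℝ) ≤ (1 + x) ^ δ := Real.one_le_rpow (by linarith) h0.le
  have s2 : x ^ δ ≤ (1 + x) ^ δ := Real.rpow_le_rpow hx (by linarith) h0.le
  have s3 : (1 + x) ^ δ ≤ ((1 + A + B) * (1 + ‖η‖) * (1 + ‖u‖)) ^ δ := by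
    refine Real.rpow_le_rpow (by linarith) ?_ h0.le
    have : 0 ≤ ‖η‖ * ‖u‖ := by positivity
    nlinarith [mul_nonneg hA hu0, mul_nonneg hB hη, mul_nonneg hA this, mul_nonneg hB this]
  rw [Real.mul_rpow (by positivity) (by positivity), Real.mul_rpow (by positivity) (by positivity)] at s3
  have s4 : (1 + ‖u‖) ^ δ ≤ 1 + ‖u‖ := by
    have := Real.rpow_le_rpow_of_exponent_le (x := 1 + ‖u‖) (by linarith) h1.le
    simpa using this
  have s5 : (1 + A + B) ^ δ * (1 + ‖η‖) ^ δ * (1 + ‖u‖) ^ δ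
      ≤ (1 + A + B) ^ δ * (1 + ‖η‖) ^ δ * (1 + ‖u‖) :=
    mul_le_mul_of_nonneg_left s4 (by positivity)
  nlinarith

lemma aux_inner (δ b a₁ a₂ a₃ a₄ : ℝ) (h0 : 0 < δ) (h1 : δ < 1) (hb : 0 < b) (ha₄ : a₄ ≠ 0) :
    ∃ C > (0 : ℝ), ∀ η : EuclideanSpace ℝ (Fin 3),
      ∫ ζ : EuclideanSpace ℝ (Fin 3),
        (1 + ‖a₁ • η + a₂ • ζ‖ ^ δ) * Real.exp (-b * ‖a₃ • η + a₄ • ζ‖)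
          ≤ C * (1 + ‖η‖) ^ δ := by
  obtain ⟨M, hM, hpt⟩ := aux_pt δ a₁ a₂ a₃ a₄ h0 h1 ha₄
  set g : EuclideanSpace ℝ (Fin 3) → ℝ := fun u => (1 + ‖u‖) * Real.exp (-b * ‖u‖) with hg
  have hgi : Integrable g := aux_int1 b hb
  have hK : 0 ≤ ∫ u, g (a₄ • u) := integral_nonneg fun u => by simp only [hg]; positivity
  refine ⟨M * (∫ u, g (a₄ • u)) + 1, by positivity, fun η => ?_⟩
  have key : ∀ ζ : EuclideanSpace ℝ (Fin 3), a₃ • η + a₄ • ζ = a₄ • ((a₃ / a₄) • η + ζ) := by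
    intro ζ
    rw [smul_add, smul_smul, mul_div_cancel₀ _ ha₄]
  have hi : Integrable (fun ζ : EuclideanSpace ℝ (Fin 3) => g (a₃ • η + a₄ • ζ)) := by
    simp only [key]
    exact (hgi.comp_smul ha₄).comp_add_left ((a₃ / a₄) • η)
  have he : ∫ ζ : EuclideanSpace ℝ (Fin 3), g (a₃ • η + a₄ • ζ) = ∫ u, g (a₄ • u) := by
    simp only [key]
    exact integral_add_left_eq_self (fun u => g (a₄ • u)) ((a₃ / a₄) • η)
  calc _ ≤ ∫ ζ : EuclideanSpace ℝ (Fin 3), M * (1 + ‖η‖) ^ δ * g (a₃ • η + a₄ • ζ) := by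
        refine integral_mono_of_nonneg (Filter.Eventually.of_forall fun ζ => ?_)
          (hi.const_mul _) (Filter.Eventually.of_forall fun ζ => ?_)
        · simp only [Pi.zero_apply]; positivity
        · have := mul_le_mul_of_nonneg_right (hpt η ζ)
            (Real.exp_pos (-b * ‖a₃ • η + a₄ • ζ‖)).le
          simp only [hg]
          linarith
    _ = M * (1 + ‖η‖) ^ δ * ∫ u, g (a₄ • u) := by rw [integral_const_mul, he]
    _ ≤ _ := by
        have : 0 ≤ (1 + ‖η‖) ^ δ := by positivity
        nlinarith

theorem stmt_9 (δ b a₁ a₂ a₃ a₄ : ℝ) (hδ : δ ∈ Set.Ioo (0 : ℝ) 1) (hb : 0 < b)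
    (ha₄ : a₄ ≠ 0)
    (J : EuclideanSpace ℝ (Fin 3) → ℝ → ℝ)
    (hJ : ∀ η' s, J η' s = ∫ η : EuclideanSpace ℝ (Fin 3),
      ∫ ζ : EuclideanSpace ℝ (Fin 3),
        (Real.exp (-s * ‖η - η'‖) / ‖η - η'‖) *
          (1 + ‖a₁ • η + a₂ • ζ‖ ^ δ) * Real.exp (-b * ‖a₃ • η + a₄ • ζ‖)) :
    ∃ c > (0 : ℝ), ∀ η' : EuclideanSpace ℝ (Fin 3), ∀ s : ℝ,
      (1 ≤ s → J η' s ≤ c * (1 + ‖η'‖) ^ δ / s ^ 2) ∧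
      (0 < s → s ≤ Real.sqrt 2 → J η' s ≤ c * (1 + ‖η'‖) ^ δ / s ^ (2 + δ)) := by
  obtain ⟨h0, h1⟩ := hδ
  obtain ⟨C, hC, hin⟩ := aux_inner δ b a₁ a₂ a₃ a₄ h0 h1 hb ha₄
  set G : EuclideanSpace ℝ (Fin 3) → ℝ :=
    fun u => Real.exp (-1 * ‖u‖) / ‖u‖ * (1 + ‖u‖) with hG
  have hGi : Integrable G := aux_int2
  have hK : 0 ≤ ∫ u, G u := integral_nonneg fun u => by simp only [hG]; positivity
  -- the main estimate, for a given bound of the weight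
  have main : ∀ (η' : EuclideanSpace ℝ (Fin 3)) (s K : ℝ), 0 < s → 0 ≤ K →
      (∀ r : ℝ, 0 ≤ r → (1 + r) ^ δ ≤ K * (1 + s * r)) →
      J η' s ≤ C * (1 + ‖η'‖) ^ δ * K * (∫ u, G u) / s ^ 2 := by
    intro η' s K hs hK0 hw
    have hi : Integrable (fun η : EuclideanSpace ℝ (Fin 3) => G (s • (η - η'))) :=
      (hGi.comp_smul hs.ne').comp_sub_right η'
    have he : ∫ η : EuclideanSpace ℝ (Fin 3), G (s • (η - η')) = (s ^ 3)⁻¹ * ∫ u, G u := by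
      rw [integral_sub_right_eq_self (fun u => G (s • u)) η',
        Measure.integral_comp_smul_of_nonneg volume G s (hR := hs.le)]
      simp
    rw [hJ]
    calc _ ≤ ∫ η : EuclideanSpace ℝ (Fin 3),
          C * (1 + ‖η'‖) ^ δ * K * s * G (s • (η - η')) := by
          refine integral_mono_of_nonneg (Filter.Eventually.of_forall fun η => ?_)
            (hi.const_mul _) (Filter.Eventually.of_forall fun η => ?_)
          · exact integral_nonneg fun ζ => by simp only [Pi.zero_apply]; positivity
          · simp only [mul_assoc]
            rw [integral_const_mul]
            have hr := norm_nonneg (η - η')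
            have hη' := norm_nonneg η'
            have e1 : (1 + ‖η‖) ^ δ ≤ (1 + ‖η'‖) ^ δ * (K * (1 + s * ‖η - η'‖)) := by
              calc (1 + ‖η‖) ^ δ ≤ ((1 + ‖η'‖) * (1 + ‖η - η'‖)) ^ δ := by
                    refine Real.rpow_le_rpow (by positivity) ?_ h0.le
                    have : ‖η‖ ≤ ‖η - η'‖ + ‖η'‖ := by
                      simpa using norm_add_le (η - η') η'
                    nlinarith [mul_nonneg hr hη']
                _ = (1 + ‖η'‖) ^ δ * (1 + ‖η - η'‖) ^ δ :=
                    Real.mul_rpow (by positivity) (by positivity)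
                _ ≤ _ := mul_le_mul_of_nonneg_left (hw _ hr) (by positivity)
            have e2 := (hin η).trans (mul_le_mul_of_nonneg_left e1 hC.le)
            have e3 := mul_le_mul_of_nonneg_left e2
              (show 0 ≤ Real.exp (-s * ‖η - η'‖) / ‖η - η'‖ by positivity)
            refine e3.trans (le_of_eq ?_)
            simp only [hG, norm_smul, Real.norm_eq_abs, abs_of_pos hs]
            rcases hr.eq_or_lt with h | h
            · simp [← h]
            · have e4 : -1 * (s * ‖η - η'‖) = -s * ‖η - η'‖ := by ring
              rw [e4]
              field_simp
      _ = _ := by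
          rw [integral_const_mul, he]
          field_simp
  refine ⟨2 * C * (∫ u, G u) + 1, by positivity, fun η' s => ⟨fun hs => ?_, fun hs hs2 => ?_⟩⟩
  · have hs0 : 0 < s := by linarith
    refine (main η' s 1 hs0 zero_le_one fun r hr => ?_).trans ?_
    · have := Real.rpow_le_rpow_of_exponent_le (x := 1 + r) (by linarith) h1.le
      rw [Real.rpow_one] at this
      nlinarith
    · refine div_le_div_of_nonneg_right ?_ (by positivity)
      have : 0 ≤ (1 + ‖η'‖) ^ δ := by positivity
      have : 0 ≤ C * (∫ u, G u) * (1 + ‖η'‖) ^ δ := by positivity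
      nlinarith
  · have hs3 : s ≤ 2 := hs2.trans (by rw [Real.sqrt_le_left] <;> norm_num)
    have hp : 0 < s ^ δ := by positivity
    refine (main η' s (2 / s ^ δ) hs (by positivity) fun r hr => ?_).trans ?_
    · have t1 : (s * (1 + r)) ^ δ ≤ (2 * (1 + s * r)) ^ δ := by
        refine Real.rpow_le_rpow (by positivity) ?_ h0.le
        have : 0 ≤ s * r := by positivity
        nlinarith
      have t2 : (2 * (1 + s * r)) ^ δ ≤ 2 * (1 + s * r) := by
        have : 0 ≤ s * r := by positivity
        have := Real.rpow_le_rpow_of_exponent_le (x := 2 * (1 + s * r)) (by linarith) h1.le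
        simpa only [Real.rpow_one] using this
      rw [Real.mul_rpow hs.le (by positivity)] at t1
      rw [div_mul_eq_mul_div, le_div_iff₀ hp]
      linarith
    · have hsp : s ^ (2 + δ) = s ^ 2 * s ^ δ := by
        rw [Real.rpow_add hs]; norm_num
      rw [hsp]
      have : C * (1 + ‖η'‖) ^ δ * (2 / s ^ δ) * (∫ u, G u) / s ^ 2
          = (2 * C * (∫ u, G u)) * (1 + ‖η'‖) ^ δ / (s ^ 2 * s ^ δ) := by
        field_simp
      rw [this]
      refine div_le_div_of_nonneg_right ?_ (by positivity)
      have : 0 ≤ (1 + ‖η'‖) ^ δ := by positivity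
      nlinarith
end
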